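/- arXiv:2202.12927 — 4 statements merged into one kernel-verified Lean document; each statement's English description precedes it below -/
import Mathlib

section
/- Let d ≥ 1, let ρ̄ satisfy assumption (T), let ζ satisfy assumption (M), and let V satisfy assumption (V). Let ε_n → 0 be a sequence of positive numbers and let ρ_n be Borel probability measures on ℝ^d converging narrowly to ρ. Then liminf_{n→∞} [ E_{ε_n}(ρ_n) + ∫ (ζ_{ε_n}*V) dρ_n ] ≥ E(ρ) + ∫ V dρ (as elements of [−∞,∞], where E takes values in [0,∞]). -/
/-!
The energy is handled by convex duality. For a continuous compactly supported `f`, the pointwise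
Young inequality `u f ≤ u² / (2 ρ̄) + f² ρ̄ / 2` with `u = ζ_ε * μ`, together with Fubini and the
evenness of `ζ`, gives `∫ (ζ_ε * f) dμ ≤ E_ε(μ) + ½ ∫ f² ρ̄` (`integral_convF_le`). Since
`ζ_ε * f → f` uniformly (`convF_sub_le`), narrow convergence yields
`∫ f dρ ≤ S + ½ ∫ f² ρ̄` for each real `S` above the liminf of the energies.

This dual bound forces `E(ρ) ≤ S` (`intEnergy_le_of_dual`): by density of `C_c` in `L²(ρ + ρ̄ dx)`
it extends to bounded measurable functions of bounded support (`dual_ineq_extend`); multiples of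
indicators of null sets then show `ρ ≪ dx`, and truncations of `(dρ/dx) / ρ̄` followed by Fatou's
lemma give the bound on the energy.

The potential term converges, because `V` is bounded and Lipschitz, so that again `ζ_ε * V → V`
uniformly (`tendsto_integral_convF`); superadditivity of the liminf concludes.
-/


open MeasureTheory Filter Topology Metric
open scoped ENNReal RealInnerProductSpace Classical

noncomputable section

/-- Euclidean space `ℝ^d`. -/
abbrev Ed (d : ℕ) := EuclideanSpace ℝ (Fin d)

/-- Rescaled mollifier `ζ_ε(x) = ε^{-d} ζ(x/ε)`. -/
def zE {d : ℕ} (ζ : Ed d → ℝ) (ε : ℝ) (x : Ed d) : ℝ :=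
  (ε ^ d)⁻¹ * ζ (ε⁻¹ • x)

/-- Convolution `ζ_ε * μ` of the rescaled mollifier with a measure. -/
def convM {d : ℕ} (ζ : Ed d → ℝ) (ε : ℝ) (μ : Measure (Ed d)) (x : Ed d) : ℝ :=
  ∫ y, zE ζ ε (x - y) ∂μ

/-- Convolution `ζ_ε * f` of the rescaled mollifier with a function. -/
def convF {d : ℕ} (ζ : Ed d → ℝ) (ε : ℝ) (f : Ed d → ℝ) (x : Ed d) : ℝ :=
  ∫ y, zE ζ ε (x - y) * f y

/-- `(∇ζ_ε) * μ`, the gradient of the mollified measure. -/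
def gradConvM {d : ℕ} (ζ : Ed d → ℝ) (ε : ℝ) (μ : Measure (Ed d)) (x : Ed d) : Ed d :=
  ∫ y, gradient (zE ζ ε) (x - y) ∂μ

/-- `∇ζ_ε * ((ζ_ε*μ)/ρ̄)`. -/
def opT {d : ℕ} (ζ : Ed d → ℝ) (ε : ℝ) (ρb : Ed d → ℝ) (μ : Measure (Ed d)) (x : Ed d) : Ed d :=
  ∫ z, ((convM ζ ε μ z) / ρb z) • gradient (zE ζ ε) (x - z)

/-- Assumption (T): `ρ̄ ∈ C¹` and `1/C ≤ ρ̄ ≤ C`. -/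
def AssumptionT {d : ℕ} (ρb : Ed d → ℝ) : Prop :=
  ContDiff ℝ 1 ρb ∧ ∃ C : ℝ, 0 < C ∧ ∀ x, C⁻¹ ≤ ρb x ∧ ρb x ≤ C

/-- Assumption (M) on the mollifier. -/
def AssumptionM {d : ℕ} (ζ : Ed d → ℝ) : Prop :=
  ContDiff ℝ 2 ζ ∧ (∀ x, ζ (-x) = ζ x) ∧ (∀ x, 0 ≤ ζ x) ∧ ((∫ x, ζ x) = 1) ∧
    (∃ M : ℝ, ∀ x, ‖iteratedFDeriv ℝ 2 ζ x‖ ≤ M) ∧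
    ∃ Cz : ℝ, 0 < Cz ∧ ∃ q q' : ℝ, (d : ℝ) + 1 < q ∧ (d : ℝ) < q' ∧
      ∀ x : Ed d, x ≠ 0 → ζ x ≤ Cz * ‖x‖ ^ (-q) ∧ ‖gradient ζ x‖ ≤ Cz * ‖x‖ ^ (-q')

/-- Assumption (V) on the external potential. -/
def AssumptionV {d : ℕ} (V : Ed d → ℝ) : Prop :=
  ContDiff ℝ 2 V ∧ Integrable V ∧ (∃ M : ℝ, ∀ x, |V x| ≤ M) ∧
    (∃ M : ℝ, ∀ x, ‖gradient V x‖ ≤ M) ∧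
    ∃ lam : ℝ, ∀ x v, lam * ‖v‖ ^ 2 ≤ fderiv ℝ (fun y => fderiv ℝ V y) x v v

/-- Assumption (C) on a confining potential. -/
def AssumptionC {d : ℕ} (W : Ed d → ℝ) : Prop :=
  (∀ x, 0 ≤ W x) ∧ ConvexOn ℝ Set.univ W ∧ ContDiff ℝ 2 W ∧
    ∃ M : ℝ, ∀ x, ‖iteratedFDeriv ℝ 2 W x‖ ≤ M

/-- Assumption (Ck) on the family of confining potentials. -/
def AssumptionCk {d : ℕ} (Ω : Set (Ed d)) (W : ℕ → Ed d → ℝ) : Prop :=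
  (∀ k, ∀ x ∈ Ω, W k x = 0) ∧
    ∀ (c : Ed d) (r : ℝ), 0 < r → closure (ball c r) ⊆ (closure Ω)ᶜ →
      Tendsto (fun k => sInf ((W k) '' (ball c r))) atTop atTop

/-- Narrow convergence of a sequence of measures. -/
def NarrowTendsto {d : ℕ} (μn : ℕ → Measure (Ed d)) (μ : Measure (Ed d)) : Prop :=
  ∀ f : Ed d → ℝ, Continuous f → (∃ M : ℝ, ∀ x, |f x| ≤ M) →
    Tendsto (fun n => ∫ x, f x ∂(μn n)) atTop (𝓝 (∫ x, f x ∂μ))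

/-- The internal energy `E`, with values in `[0,∞]`. -/
def intEnergy {d : ℕ} (ρb : Ed d → ℝ) (μ : Measure (Ed d)) : ℝ≥0∞ :=
  if μ ≪ (volume : Measure (Ed d)) then
    2⁻¹ * ∫⁻ x, (μ.rnDeriv volume x) ^ 2 / ENNReal.ofReal (ρb x)
  else ⊤

/-- The regularized internal energy `E_ε`, with values in `[0,∞]`. -/
def regEnergyE {d : ℕ} (ζ : Ed d → ℝ) (ε : ℝ) (ρb : Ed d → ℝ) (μ : Measure (Ed d)) : ℝ≥0∞ :=
  2⁻¹ * ∫⁻ x, ENNReal.ofReal ((convM ζ ε μ x) ^ 2 / ρb x)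

/-- The regularized internal energy `E_ε`, real-valued. -/
def regEnergyR {d : ℕ} (ζ : Ed d → ℝ) (ε : ℝ) (ρb : Ed d → ℝ) (μ : Measure (Ed d)) : ℝ :=
  (∫ x, (convM ζ ε μ x) ^ 2 / ρb x) / 2

/-- Confinement energy `𝒱_Ω`. -/
def confE {d : ℕ} (Ω : Set (Ed d)) (μ : Measure (Ed d)) : ℝ≥0∞ :=
  if μ ((closure Ω)ᶜ) = 0 then 0 else ⊤

/-- The limit energy `F = E + 𝒱 + 𝒱_Ω`, with values in the extended reals. -/
def Flim {d : ℕ} (ρb V : Ed d → ℝ) (Ω : Set (Ed d)) (μ : Measure (Ed d)) : EReal :=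
  (intEnergy ρb μ : EReal) + ((∫ x, V x ∂μ : ℝ) : EReal) + (confE Ω μ : EReal)

/-- The regularized energy `F_{ε,k} = E_ε + 𝒱_ε + 𝒱_k`, with values in the extended reals. -/
def Fek {d : ℕ} (ζ : Ed d → ℝ) (ε : ℝ) (ρb V W : Ed d → ℝ) (μ : Measure (Ed d)) : EReal :=
  (regEnergyE ζ ε ρb μ : EReal) + ((∫ x, convF ζ ε V x ∂μ : ℝ) : EReal) +
    ((∫⁻ x, ENNReal.ofReal (W x) ∂μ : ℝ≥0∞) : EReal)


/-! ### Mollification -/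

/-- The normalisation `∫ ζ = 1` forces integrability, since the Bochner integral of a
non-integrable function is `0`. -/
lemma AssumptionM.integrable {d : ℕ} {ζ : Ed d → ℝ} (hM : AssumptionM ζ) : Integrable ζ := by
  by_contra h
  have h1 := hM.2.2.2.1
  rw [integral_undef h] at h1
  exact zero_ne_one h1

lemma AssumptionM.continuous_zE {d : ℕ} {ζ : Ed d → ℝ} (hM : AssumptionM ζ) (ε : ℝ) :
    Continuous (zE ζ ε) := by
  have := hM.1.continuous
  unfold zE
  fun_prop

lemma AssumptionM.integrable_zE {d : ℕ} {ζ : Ed d → ℝ} (hM : AssumptionM ζ) {ε : ℝ}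
    (hε : 0 < ε) : Integrable (zE ζ ε) :=
  (hM.integrable.comp_smul (inv_ne_zero hε.ne')).const_mul _

lemma AssumptionM.zE_neg {d : ℕ} {ζ : Ed d → ℝ} (hM : AssumptionM ζ) (ε : ℝ) (x y : Ed d) :
    zE ζ ε (x - y) = zE ζ ε (y - x) := by
  unfold zE
  rw [← neg_sub y x, smul_neg, hM.2.1]

/-- Substituting `y = x - ε z` moves the scaling from the mollifier to the function. -/
lemma convF_eq {d : ℕ} (ζ : Ed d → ℝ) {ε : ℝ} (hε : 0 < ε) (f : Ed d → ℝ) (x : Ed d) :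
    convF ζ ε f x = ∫ z, ζ z * f (x - ε • z) := by
  have h1 : convF ζ ε f x = ∫ w, zE ζ ε w * f (x - w) := by
    unfold convF
    rw [← integral_sub_left_eq_self (fun w => zE ζ ε w * f (x - w)) volume x]
    simp
  have h2 := Measure.integral_comp_inv_smul (volume : Measure (Ed d))
    (fun z => ζ z * f (x - ε • z)) ε
  simp only [smul_inv_smul₀ hε.ne', finrank_euclideanSpace, Fintype.card_fin, smul_eq_mul] at h2
  have hp : 0 < ε ^ d := by positivity
  rw [h1]
  simp only [zE, mul_assoc]
  rw [integral_const_mul, h2, abs_of_pos hp, inv_mul_cancel_left₀ hp.ne']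

/-- For bounded uniformly continuous `f`, `ζ_ε * f → f` uniformly. The mass of `ζ` far from the
origin is controlled by dominated convergence, so no moment of `ζ` is needed. -/
lemma convF_sub_le {d : ℕ} {ζ : Ed d → ℝ} (hM : AssumptionM ζ) {f : Ed d → ℝ}
    (hf : UniformContinuous f) {M : ℝ} (hfM : ∀ x, |f x| ≤ M)
    {ε : ℕ → ℝ} (hε : ∀ n, 0 < ε n) (hε0 : Tendsto ε atTop (𝓝 0)) {η : ℝ} (hη : 0 < η) :
    ∀ᶠ n in atTop, ∀ x, |convF ζ (ε n) f x - f x| ≤ η := by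
  obtain ⟨δ, hδ, hfδ⟩ := Metric.uniformContinuous_iff.1 hf (η / 2) (by positivity)
  have hM0 : 0 ≤ M := (abs_nonneg _).trans (hfM 0)
  have hz := hM.integrable
  have hz0 := hM.2.2.1
  -- `S n` is the set where `ε n • z` leaves the radius `δ` given by uniform continuity.
  set S : ℕ → Set (Ed d) := fun n => {z | δ ≤ ε n * ‖z‖} with hS
  have hSm : ∀ n, MeasurableSet (S n) := fun n =>
    (isClosed_le continuous_const (by fun_prop)).measurableSet
  have htail : Tendsto (fun n => ∫ z, (S n).indicator ζ z) atTop (𝓝 (∫ _ : Ed d, (0 : ℝ))) := by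
    refine tendsto_integral_of_dominated_convergence ζ
      (fun n => (hz.indicator (hSm n)).aestronglyMeasurable) hz ?_ ?_
    · intro n
      refine Eventually.of_forall fun z => ?_
      by_cases h : z ∈ S n
      · simp [h, abs_of_nonneg (hz0 z)]
      · simp [h, hz0 z]
    · refine Eventually.of_forall fun z => ?_
      have h1 : Tendsto (fun n => ε n * ‖z‖) atTop (𝓝 0) := by simpa using hε0.mul_const ‖z‖
      refine tendsto_const_nhds.congr' ?_
      filter_upwards [h1.eventually (gt_mem_nhds hδ)] with n hn
      rw [Set.indicator_of_notMem]
      simpa [hS] using hn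
  rw [integral_zero] at htail
  have h2 : Tendsto (fun n => 2 * M * ∫ z, (S n).indicator ζ z) atTop (𝓝 0) := by
    simpa using htail.const_mul (2 * M)
  filter_upwards [h2.eventually (gt_mem_nhds (half_pos hη))] with n hn x
  have hi1 : Integrable (fun z => ζ z * f (x - ε n • z)) :=
    hz.mul_bdd (c := M) (hf.continuous.comp (by fun_prop)).aestronglyMeasurable
      (Eventually.of_forall fun z => hfM _)
  have hi2 : Integrable (fun z => ζ z * f x) := hz.mul_const _
  have h3 : convF ζ (ε n) f x - f x = ∫ z, (ζ z * f (x - ε n • z) - ζ z * f x) := by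
    rw [integral_sub hi1 hi2, ← convF_eq ζ (hε n), integral_mul_const, hM.2.2.2.1, one_mul]
  have hb : ∀ z, |ζ z * f (x - ε n • z) - ζ z * f x|
      ≤ η / 2 * ζ z + 2 * M * (S n).indicator ζ z := by
    intro z
    rw [← mul_sub, abs_mul, abs_of_nonneg (hz0 z)]
    by_cases h : z ∈ S n
    · rw [Set.indicator_of_mem h]
      have : |f (x - ε n • z) - f x| ≤ 2 * M := by
        have := abs_sub (f (x - ε n • z)) (f x)
        linarith [hfM (x - ε n • z), hfM x]
      nlinarith [hz0 z]
    · rw [Set.indicator_of_notMem h]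
      have hd : dist (x - ε n • z) x < δ := by
        rw [dist_eq_norm]
        simpa [norm_smul, abs_of_pos (hε n), hS] using h
      have := (hfδ hd).le
      rw [Real.dist_eq] at this
      nlinarith [hz0 z]
  rw [h3]
  calc |∫ z, (ζ z * f (x - ε n • z) - ζ z * f x)|
      ≤ ∫ z, |ζ z * f (x - ε n • z) - ζ z * f x| := abs_integral_le_integral_abs
    _ ≤ ∫ z, (η / 2 * ζ z + 2 * M * (S n).indicator ζ z) :=
        integral_mono (hi1.sub hi2).abs
          ((hz.const_mul _).add ((hz.indicator (hSm n)).const_mul _)) hb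
    _ = η / 2 + 2 * M * ∫ z, (S n).indicator ζ z := by
        rw [integral_add (hz.const_mul _) ((hz.indicator (hSm n)).const_mul _),
          integral_const_mul, integral_const_mul, hM.2.2.2.1, mul_one]
    _ ≤ η := by linarith

lemma measurable_convF {d : ℕ} {ζ : Ed d → ℝ} (hM : AssumptionM ζ) {f : Ed d → ℝ}
    (hf : Continuous f) (ε : ℝ) : StronglyMeasurable (convF ζ ε f) := by
  have h := hM.continuous_zE ε
  unfold convF
  refine StronglyMeasurable.integral_prod_right (f := fun x y => zE ζ ε (x - y) * f y) ?_
  refine Continuous.stronglyMeasurable ?_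
  simp only [Function.uncurry_def]
  fun_prop

/-- Uniform convergence `ζ_ε * f → f` combines with narrow convergence of the measures. -/
lemma tendsto_integral_convF {d : ℕ} {ζ : Ed d → ℝ} (hM : AssumptionM ζ) {f : Ed d → ℝ}
    (hf : UniformContinuous f) {M : ℝ} (hfM : ∀ x, |f x| ≤ M)
    {ε : ℕ → ℝ} (hε : ∀ n, 0 < ε n) (hε0 : Tendsto ε atTop (𝓝 0))
    {ρn : ℕ → Measure (Ed d)} {ρ : Measure (Ed d)}
    (hρn : ∀ n, IsProbabilityMeasure (ρn n)) (hconv : NarrowTendsto ρn ρ) :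
    Tendsto (fun n => ∫ x, convF ζ (ε n) f x ∂(ρn n)) atTop (𝓝 (∫ x, f x ∂ρ)) := by
  have h1 := hconv f hf.continuous ⟨M, hfM⟩
  have h2 : Tendsto (fun n => ∫ x, convF ζ (ε n) f x ∂(ρn n) - ∫ x, f x ∂(ρn n)) atTop
      (𝓝 0) := by
    rw [Metric.tendsto_nhds]
    intro η hη
    filter_upwards [convF_sub_le hM hf hfM hε hε0 (half_pos hη)] with n hn
    have hif : Integrable f (ρn n) :=
      Integrable.of_bound hf.continuous.aestronglyMeasurable M (Eventually.of_forall hfM)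
    have hid : Integrable (fun x => convF ζ (ε n) f x - f x) (ρn n) :=
      Integrable.of_bound ((measurable_convF hM hf.continuous _).sub
        hf.continuous.stronglyMeasurable).aestronglyMeasurable (η / 2) (Eventually.of_forall hn)
    have hic : Integrable (convF ζ (ε n) f) (ρn n) := by
      refine (hid.add hif).congr (Eventually.of_forall fun x => ?_)
      simp
    rw [dist_zero_right, ← integral_sub hic hif]
    have := norm_integral_le_of_norm_le_const (μ := ρn n)
      (f := fun x => convF ζ (ε n) f x - f x) (C := η / 2) (Eventually.of_forall hn)
    simp only [probReal_univ, mul_one] at this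
    linarith
  simpa using h2.add h1

/-! ### Dual lower bound for the regularized energy -/

/-- Testing `ζ_ε * μ` against `f` and using `u f ≤ u² / (2 ρ̄) + f² ρ̄ / 2` pointwise. -/
lemma integral_convF_le {d : ℕ} {ζ : Ed d → ℝ} (hM : AssumptionM ζ) {ρb : Ed d → ℝ}
    (hT : AssumptionT ρb) {ε : ℝ} (hε : 0 < ε) (μ : Measure (Ed d)) [IsProbabilityMeasure μ]
    {S : ℝ} (hS0 : 0 ≤ S) (hS : regEnergyE ζ ε ρb μ ≤ ENNReal.ofReal S)
    {f : Ed d → ℝ} (hf : Continuous f) (hfc : HasCompactSupport f) :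
    ∫ x, convF ζ ε f x ∂μ ≤ S + (∫ x, f x ^ 2 * ρb x) / 2 := by
  obtain ⟨hρc, C, hC, hρC⟩ := hT
  have hρ0 : ∀ x, 0 < ρb x := fun x => (inv_pos.2 hC).trans_le (hρC x).1
  have hρcont := hρc.continuous
  have hzc := hM.continuous_zE ε
  have hz := hM.integrable_zE hε
  obtain ⟨M, hfM⟩ := hf.bounded_above_of_compact_support hfc
  have hprod : Integrable (fun p : Ed d × Ed d => zE ζ ε (p.1 - p.2)) (volume.prod μ) := by
    rw [integrable_prod_iff' (by
      exact (Continuous.aestronglyMeasurable (by fun_prop)))]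
    refine ⟨Eventually.of_forall fun y => hz.comp_sub_right y, ?_⟩
    simp only [integral_sub_right_eq_self (fun x => ‖zE ζ ε x‖)]
    exact integrable_const _
  have hprodf : Integrable (fun p : Ed d × Ed d => zE ζ ε (p.1 - p.2) * f p.1)
      (volume.prod μ) :=
    hprod.mul_bdd (c := M) (Continuous.aestronglyMeasurable (by fun_prop))
      (Eventually.of_forall fun p => hfM _)
  have hfub : ∫ x, convM ζ ε μ x * f x = ∫ x, convF ζ ε f x ∂μ := by
    have := integral_integral_swap (f := fun x y => zE ζ ε (x - y) * f x) hprodf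
    simp only [integral_mul_const] at this
    simp only [convM, convF]
    rw [this]
    simp only [hM.zE_neg ε]
  have hu : Integrable (convM ζ ε μ) := hprod.integral_prod_left
  have hum : AEStronglyMeasurable (fun x => convM ζ ε μ x ^ 2 / ρb x) :=
    ((hu.aestronglyMeasurable.aemeasurable.pow_const 2).div
      hρcont.aemeasurable).aestronglyMeasurable
  have hu0 : ∀ x, 0 ≤ convM ζ ε μ x ^ 2 / ρb x := fun x => div_nonneg (sq_nonneg _) (hρ0 x).le
  have hlin : ∫⁻ x, ENNReal.ofReal (convM ζ ε μ x ^ 2 / ρb x) ≤ ENNReal.ofReal (2 * S) := by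
    unfold regEnergyE at hS
    rw [ENNReal.inv_mul_le_iff (by simp) (by simp)] at hS
    rwa [ENNReal.ofReal_mul (by norm_num), ENNReal.ofReal_ofNat]
  have hui : Integrable (fun x => convM ζ ε μ x ^ 2 / ρb x) :=
    (lintegral_ofReal_ne_top_iff_integrable hum (Eventually.of_forall hu0)).1
      (ne_top_of_le_ne_top ENNReal.ofReal_ne_top hlin)
  have hui2 : ∫ x, convM ζ ε μ x ^ 2 / ρb x ≤ 2 * S := by
    rwa [← ofReal_integral_eq_lintegral_ofReal hui (Eventually.of_forall hu0),
      ENNReal.ofReal_le_ofReal_iff (by positivity)] at hlin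
  have hfi : Integrable (fun x => f x ^ 2 * ρb x) := by
    refine Continuous.integrable_of_hasCompactSupport (by fun_prop) ?_
    refine HasCompactSupport.mul_right ?_
    exact hfc.comp_left (g := fun t : ℝ => t ^ 2) (by simp)
  have hufi : Integrable (fun x => convM ζ ε μ x * f x) :=
    hu.mul_bdd (c := M) hf.aestronglyMeasurable (Eventually.of_forall hfM)
  have hpt : ∀ x, convM ζ ε μ x * f x
      ≤ (convM ζ ε μ x ^ 2 / ρb x) / 2 + (f x ^ 2 * ρb x) / 2 := by
    intro x
    have h := hρ0 x
    have : (convM ζ ε μ x ^ 2 / ρb x) / 2 + (f x ^ 2 * ρb x) / 2 - convM ζ ε μ x * f x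
        = (convM ζ ε μ x - f x * ρb x) ^ 2 / ρb x / 2 := by
      field_simp
      ring
    have h2 : 0 ≤ (convM ζ ε μ x - f x * ρb x) ^ 2 / ρb x / 2 := by positivity
    linarith
  rw [← hfub]
  calc ∫ x, convM ζ ε μ x * f x
      ≤ ∫ x, ((convM ζ ε μ x ^ 2 / ρb x) / 2 + (f x ^ 2 * ρb x) / 2) :=
        integral_mono hufi ((hui.div_const 2).add (hfi.div_const 2)) hpt
    _ = (∫ x, convM ζ ε μ x ^ 2 / ρb x) / 2 + (∫ x, f x ^ 2 * ρb x) / 2 := by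
        rw [integral_add (hui.div_const 2) (hfi.div_const 2), integral_div, integral_div]
    _ ≤ _ := by linarith

/-! ### Dual characterisation of the limit energy -/

/-- The dual inequality passes from `C_c` to bounded measurable functions that are square
integrable for `ν`, by density of `C_c` in `L²(ρ + ν)`. -/
lemma dual_ineq_extend {d : ℕ} (ρ ν : Measure (Ed d)) [IsProbabilityMeasure ρ]
    [IsLocallyFiniteMeasure ν] {S : ℝ}
    (H : ∀ f : Ed d → ℝ, Continuous f → HasCompactSupport f →
      ∫ x, f x ∂ρ ≤ S + (∫ x, f x ^ 2 ∂ν) / 2)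
    {h : Ed d → ℝ} (hm : Measurable h) {K : ℝ} (hK : ∀ x, |h x| ≤ K) (hν : MemLp h 2 ν) :
    ∫ x, h x ∂ρ ≤ S + (∫ x, h x ^ 2 ∂ν) / 2 := by
  have hlf : IsLocallyFiniteMeasure (ρ + ν) := ⟨fun x => by
    obtain ⟨s, hs, hs'⟩ := ρ.finiteAt_nhds x
    obtain ⟨t, ht, ht'⟩ := ν.finiteAt_nhds x
    refine ⟨s ∩ t, inter_mem hs ht, ?_⟩
    rw [Measure.add_apply]
    exact ENNReal.add_lt_top.2 ⟨(measure_mono Set.inter_subset_left).trans_lt hs',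
      (measure_mono Set.inter_subset_right).trans_lt ht'⟩⟩
  have hρ : MemLp h 2 ρ :=
    MemLp.of_bound hm.aestronglyMeasurable K (Eventually.of_forall hK)
  have hsum : MemLp h 2 (ρ + ν) := by
    rw [memLp_two_iff_integrable_sq hm.aestronglyMeasurable, integrable_add_measure]
    exact ⟨hρ.integrable_sq, hν.integrable_sq⟩
  have key : ∀ η : ℝ, 0 < η → ∫ x, h x ∂ρ ≤
      η + (S + ((1 + η) * (∫ x, h x ^ 2 ∂ν) + (1 + η⁻¹) * η ^ 2) / 2) := by
    intro η hη
    obtain ⟨f, hfc, hle, hf, -⟩ := MemLp.exists_hasCompactSupport_integral_rpow_sub_le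
      (p := 2) (μ := ρ + ν) (by norm_num) (by simpa using hsum) (ε := η ^ 2) (by positivity)
    simp only [Real.rpow_ofNat, Real.norm_eq_abs, sq_abs] at hle
    have hfρ : MemLp f 2 ρ := hf.memLp_of_hasCompactSupport hfc
    have hfν : MemLp f 2 ν := hf.memLp_of_hasCompactSupport hfc
    have i1 : Integrable (fun x => (h x - f x) ^ 2) ρ := (hρ.sub hfρ).integrable_sq
    have i2 : Integrable (fun x => (h x - f x) ^ 2) ν := (hν.sub hfν).integrable_sq
    rw [integral_add_measure i1 i2] at hle
    have p1 : 0 ≤ ∫ x, (h x - f x) ^ 2 ∂ρ := integral_nonneg fun x => sq_nonneg _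
    have p2 : 0 ≤ ∫ x, (h x - f x) ^ 2 ∂ν := integral_nonneg fun x => sq_nonneg _
    have hh1 : Integrable h ρ := hρ.integrable (by norm_num)
    have hf1 : Integrable f ρ := hfρ.integrable (by norm_num)
    have a1 : ∫ x, h x ∂ρ ≤ ∫ x, (f x + (η / 2 + η⁻¹ / 2 * (h x - f x) ^ 2)) ∂ρ := by
      refine integral_mono hh1 (hf1.add ((integrable_const _).add (i1.const_mul _))) fun x => ?_
      have : f x + (η / 2 + η⁻¹ / 2 * (h x - f x) ^ 2) - h x
          = η⁻¹ / 2 * (h x - f x - η) ^ 2 := by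
        field_simp
        ring
      have h2 : 0 ≤ η⁻¹ / 2 * (h x - f x - η) ^ 2 := by positivity
      simp only
      linarith
    have i3 : Integrable (fun x => η / 2 + η⁻¹ / 2 * (h x - f x) ^ 2) ρ :=
      (integrable_const _).add (i1.const_mul _)
    rw [integral_add hf1 i3, integral_add (integrable_const _) (i1.const_mul _), integral_const_mul] at a1
    simp only [integral_const, probReal_univ, one_smul] at a1
    have a2 : ∫ x, f x ^ 2 ∂ν ≤
        ∫ x, ((1 + η) * h x ^ 2 + (1 + η⁻¹) * (h x - f x) ^ 2) ∂ν := by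
      refine integral_mono hfν.integrable_sq
        ((hν.integrable_sq.const_mul _).add (i2.const_mul _)) fun x => ?_
      have : (1 + η) * h x ^ 2 + (1 + η⁻¹) * (h x - f x) ^ 2 - f x ^ 2
          = η⁻¹ * (η * h x + (h x - f x)) ^ 2 := by
        field_simp
        ring
      have h2 : 0 ≤ η⁻¹ * (η * h x + (h x - f x)) ^ 2 := by positivity
      simp only
      linarith
    rw [integral_add (hν.integrable_sq.const_mul _) (i2.const_mul _), integral_const_mul,
      integral_const_mul] at a2
    have a3 := H f hf hfc
    have b1 : η⁻¹ / 2 * ∫ x, (h x - f x) ^ 2 ∂ρ ≤ η⁻¹ / 2 * η ^ 2 :=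
      mul_le_mul_of_nonneg_left (by linarith) (by positivity)
    have b2 : (1 + η⁻¹) * ∫ x, (h x - f x) ^ 2 ∂ν ≤ (1 + η⁻¹) * η ^ 2 :=
      mul_le_mul_of_nonneg_left (by linarith) (by positivity)
    have b3 : η⁻¹ / 2 * η ^ 2 = η / 2 := by field_simp
    linarith
  -- The right-hand side of `key` equals a polynomial in `η` for `η > 0`; let `η → 0+`.
  have hlim : Tendsto (fun η : ℝ =>
      η + (S + ((1 + η) * (∫ x, h x ^ 2 ∂ν) + (η ^ 2 + η)) / 2)) (𝓝[>] 0)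
      (𝓝 (S + (∫ x, h x ^ 2 ∂ν) / 2)) := by
    have : Continuous (fun η : ℝ =>
      η + (S + ((1 + η) * (∫ x, h x ^ 2 ∂ν) + (η ^ 2 + η)) / 2)) := by fun_prop
    have h0 := this.tendsto 0
    simp only [zero_add, add_zero, one_mul, ne_eq, OfNat.ofNat_ne_zero, not_false_eq_true,
      zero_pow] at h0
    exact h0.mono_left nhdsWithin_le_nhds
  refine ge_of_tendsto hlim ?_
  filter_upwards [self_mem_nhdsWithin] with η hη
  have hη' : (0 : ℝ) < η := hη
  have := key η hη'
  have e : (1 + η⁻¹) * η ^ 2 = η ^ 2 + η := by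
    field_simp
  rwa [e] at this

/-- The dual bound over `C_c` test functions controls `E`: indicators of null sets, scaled up,
give absolute continuity, and truncations of `(dρ/dx) / ρ̄` are near-optimal. -/
lemma intEnergy_le_of_dual {d : ℕ} {ρb : Ed d → ℝ} (hT : AssumptionT ρb)
    (ρ : Measure (Ed d)) [IsProbabilityMeasure ρ] {S : ℝ}
    (H : ∀ f : Ed d → ℝ, Continuous f → HasCompactSupport f →
      ∫ x, f x ∂ρ ≤ S + (∫ x, f x ^ 2 * ρb x) / 2) :
    intEnergy ρb ρ ≤ ENNReal.ofReal S := by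
  obtain ⟨hρc, C, hC, hρC⟩ := hT
  have hρ0 : ∀ x, 0 < ρb x := fun x => (inv_pos.2 hC).trans_le (hρC x).1
  have hρcont := hρc.continuous
  set ν : Measure (Ed d) := volume.withDensity fun x => ENNReal.ofReal (ρb x) with hν
  have hνlf : IsLocallyFiniteMeasure ν := IsLocallyFiniteMeasure.withDensity_ofReal hρcont
  have hνint : ∀ g : Ed d → ℝ, ∫ x, g x ∂ν = ∫ x, g x * ρb x := by
    intro g
    rw [hν, integral_withDensity_eq_integral_toReal_smul (by fun_prop) (by simp)]
    refine integral_congr_ae (Eventually.of_forall fun x => ?_)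
    simp only [ENNReal.toReal_ofReal (hρ0 x).le, smul_eq_mul, mul_comm]
  have H1 : ∀ h : Ed d → ℝ, Measurable h → (∃ K, ∀ x, |h x| ≤ K) →
      (∃ R, ∀ x, x ∉ ball (0 : Ed d) R → h x = 0) →
      ∫ x, h x ∂ρ ≤ S + (∫ x, h x ^ 2 * ρb x) / 2 := by
    rintro h hm ⟨K, hK⟩ ⟨R, hR⟩
    rw [← hνint]
    refine dual_ineq_extend ρ ν (fun f hf hfc => ?_) hm hK ?_
    · rw [hνint]
      exact H f hf hfc
    · have hh : h = (ball (0 : Ed d) R).indicator h := by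
        ext x
        by_cases hx : x ∈ ball (0 : Ed d) R
        · rw [Set.indicator_of_mem hx]
        · rw [Set.indicator_of_notMem hx, hR x hx]
      rw [hh, memLp_indicator_iff_restrict measurableSet_ball]
      have : IsFiniteMeasure (ν.restrict (ball (0 : Ed d) R)) :=
        ⟨by simpa using measure_ball_lt_top⟩
      exact MemLp.of_bound hm.aestronglyMeasurable K (Eventually.of_forall hK)
  have hac : ρ ≪ volume := by
    refine Measure.AbsolutelyContinuous.mk fun A hA hA0 => ?_
    have hball : ∀ n : ℕ, ρ (A ∩ ball 0 n) = 0 := by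
      intro n
      have hmeas : MeasurableSet (A ∩ ball (0 : Ed d) n) := hA.inter measurableSet_ball
      have hv0 : volume (A ∩ ball (0 : Ed d) n) = 0 := measure_mono_null Set.inter_subset_left hA0
      have ht : ∀ t : ℝ, t * ρ.real (A ∩ ball 0 n) ≤ S := by
        intro t
        have h1 := H1 ((A ∩ ball (0 : Ed d) n).indicator fun _ => t)
          (measurable_const.indicator hmeas)
          ⟨|t|, fun x => by
            by_cases hx : x ∈ A ∩ ball (0 : Ed d) n
            · rw [Set.indicator_of_mem hx]
            · rw [Set.indicator_of_notMem hx]; simp⟩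
          ⟨n, fun x hx => Set.indicator_of_notMem (fun hx' => hx hx'.2) _⟩
        have h2 : ∫ x, (A ∩ ball (0 : Ed d) n).indicator (fun _ => t) x ^ 2 * ρb x = 0 := by
          refine integral_eq_zero_of_ae ?_
          have : ∀ᵐ x ∂(volume : Measure (Ed d)), x ∉ A ∩ ball (0 : Ed d) n :=
            measure_eq_zero_iff_ae_notMem.1 hv0
          filter_upwards [this] with x hx
          rw [Set.indicator_of_notMem hx]
          simp
        rw [h2, integral_indicator_const t hmeas] at h1
        simp only [smul_eq_mul, zero_div, add_zero] at h1
        linarith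
      by_contra hne
      have hpos : 0 < ρ.real (A ∩ ball 0 n) :=
        ENNReal.toReal_pos hne (measure_ne_top _ _)
      have := ht ((S + 1) / ρ.real (A ∩ ball 0 n))
      rw [div_mul_cancel₀ _ hpos.ne'] at this
      linarith
    have : A = ⋃ n : ℕ, A ∩ ball (0 : Ed d) n := by
      rw [← Set.inter_iUnion, iUnion_ball_nat, Set.inter_univ]
    rw [this]
    exact measure_iUnion_null hball
  unfold intEnergy
  rw [if_pos hac, ENNReal.inv_mul_le_iff (by simp) (by simp)]
  set r := ρ.rnDeriv (volume : Measure (Ed d)) with hr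
  have hrm : Measurable r := Measure.measurable_rnDeriv _ _
  -- Truncation of the density at height `k` and to the ball of radius `k`.
  set g : ℕ → Ed d → ℝ := fun k => (ball (0 : Ed d) k).indicator
    fun x => min (r x).toReal k with hg
  have hgm : ∀ k, Measurable (g k) := fun k =>
    (hrm.ennreal_toReal.min measurable_const).indicator measurableSet_ball
  have hg0 : ∀ k x, 0 ≤ g k x := fun k x =>
    Set.indicator_nonneg (fun x _ => le_min ENNReal.toReal_nonneg (Nat.cast_nonneg k)) x
  have hgk : ∀ k x, g k x ≤ k := fun k x => by
    simp only [hg]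
    by_cases hx : x ∈ ball (0 : Ed d) k
    · rw [Set.indicator_of_mem hx]; exact min_le_right _ _
    · rw [Set.indicator_of_notMem hx]; exact Nat.cast_nonneg k
  have hgr : ∀ k x, g k x ≤ (r x).toReal := fun k x => by
    simp only [hg]
    by_cases hx : x ∈ ball (0 : Ed d) k
    · rw [Set.indicator_of_mem hx]; exact min_le_left _ _
    · rw [Set.indicator_of_notMem hx]; exact ENNReal.toReal_nonneg
  have hri : Integrable (fun x => (r x).toReal) := Measure.integrable_toReal_rnDeriv
  have hinv : ∀ x, (ρb x)⁻¹ ≤ C := fun x => inv_le_of_inv_le₀ hC (hρC x).1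
  have hhb : ∀ k x, |g k x / ρb x| ≤ k * C := fun k x => by
    rw [abs_of_nonneg (div_nonneg (hg0 k x) (hρ0 x).le), div_eq_mul_inv]
    exact mul_le_mul (hgk k x) (hinv x) (inv_pos.2 (hρ0 x)).le (Nat.cast_nonneg k)
  have hbound : ∀ k, ∫⁻ x, ENNReal.ofReal (g k x ^ 2 / ρb x) ≤ 2 * ENNReal.ofReal S := by
    intro k
    have hhm : Measurable fun x => g k x / ρb x := (hgm k).div hρcont.measurable
    have h1 := H1 (fun x => g k x / ρb x) hhm ⟨k * C, hhb k⟩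
      ⟨k, fun x hx => by simp only [hg]; rw [Set.indicator_of_notMem hx, zero_div]⟩
    have e1 : ∀ x, (g k x / ρb x) ^ 2 * ρb x = g k x ^ 2 / ρb x := fun x => by
      have := (hρ0 x).ne'
      field_simp
    simp only [e1] at h1
    rw [← integral_rnDeriv_smul hac] at h1
    simp only [smul_eq_mul] at h1
    have i1 : Integrable fun x => (r x).toReal * (g k x / ρb x) :=
      hri.mul_bdd hhm.aestronglyMeasurable (Eventually.of_forall (hhb k))
    have hpos : ∀ x, 0 ≤ g k x ^ 2 / ρb x := fun x => div_nonneg (sq_nonneg _) (hρ0 x).le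
    have hle : ∀ x, g k x ^ 2 / ρb x ≤ (r x).toReal * (g k x / ρb x) := fun x => by
      rw [sq, mul_div_assoc]
      exact mul_le_mul_of_nonneg_right (hgr k x) (div_nonneg (hg0 k x) (hρ0 x).le)
    have i2 : Integrable fun x => g k x ^ 2 / ρb x :=
      i1.mono' (((hgm k).pow_const 2).div hρcont.measurable).aestronglyMeasurable
        (Eventually.of_forall fun x => by
          rw [Real.norm_eq_abs, abs_of_nonneg (hpos x)]
          exact hle x)
    have h2 := integral_mono i2 i1 hle
    rw [← ofReal_integral_eq_lintegral_ofReal i2 (Eventually.of_forall hpos),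
      show 2 * ENNReal.ofReal S = ENNReal.ofReal (2 * S) by
        rw [ENNReal.ofReal_mul (by norm_num), ENNReal.ofReal_ofNat]]
    refine ENNReal.ofReal_le_ofReal ?_
    linarith
  have hpt : ∀ᵐ x ∂(volume : Measure (Ed d)), r x ^ 2 / ENNReal.ofReal (ρb x)
      = liminf (fun k => ENNReal.ofReal (g k x ^ 2 / ρb x)) atTop := by
    filter_upwards [Measure.rnDeriv_lt_top ρ volume] with x hx
    symm
    refine Tendsto.liminf_eq (tendsto_const_nhds.congr' ?_)
    obtain ⟨N, hN⟩ := exists_nat_gt (max (r x).toReal ‖x‖)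
    filter_upwards [eventually_ge_atTop N] with k hk
    have hNk : (N : ℝ) ≤ k := by exact_mod_cast hk
    have hk1 : (r x).toReal ≤ k := ((le_max_left _ _).trans hN.le).trans hNk
    have hk2 : x ∈ ball (0 : Ed d) k := by
      rw [mem_ball_zero_iff]
      exact ((le_max_right _ _).trans_lt hN).trans_le hNk
    simp only [hg]
    rw [Set.indicator_of_mem hk2, min_eq_left hk1, ENNReal.ofReal_div_of_pos (hρ0 x),
      ENNReal.ofReal_pow ENNReal.toReal_nonneg, ENNReal.ofReal_toReal hx.ne]
  rw [lintegral_congr_ae hpt]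
  refine (lintegral_liminf_le fun k =>
    (((hgm k).pow_const 2).div hρcont.measurable).ennreal_ofReal).trans ?_
  refine (liminf_le_liminf (v := fun _ => 2 * ENNReal.ofReal S)
    (Eventually.of_forall hbound)).trans ?_
  rw [liminf_const]

/-! ### The liminf inequality -/

lemma AssumptionV.uniformContinuous {d : ℕ} {V : Ed d → ℝ} (hV : AssumptionV V) :
    UniformContinuous V := by
  obtain ⟨h2, -, -, ⟨M, hM⟩, -⟩ := hV
  refine (lipschitzWith_of_nnnorm_fderiv_le (𝕜 := ℝ) (C := M.toNNReal)
    (h2.differentiable (by norm_num)) fun x => ?_).uniformContinuous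
  rw [← NNReal.coe_le_coe, coe_nnnorm]
  have : ‖gradient V x‖ = ‖fderiv ℝ V x‖ := by
    unfold gradient
    exact LinearIsometryEquiv.norm_map _ _
  rw [← this]
  exact (hM x).trans (Real.le_coe_toNNReal M)

/-- Lower semicontinuity of the internal energies along narrowly converging sequences. -/
lemma intEnergy_le_liminf {d : ℕ} {ρb : Ed d → ℝ} (hT : AssumptionT ρb)
    {ζ : Ed d → ℝ} (hM : AssumptionM ζ)
    {ε : ℕ → ℝ} (hε : ∀ n, 0 < ε n) (hε0 : Tendsto ε atTop (𝓝 0))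
    {ρn : ℕ → Measure (Ed d)} {ρ : Measure (Ed d)}
    (hρn : ∀ n, IsProbabilityMeasure (ρn n)) (hρ : IsProbabilityMeasure ρ)
    (hconv : NarrowTendsto ρn ρ) :
    (intEnergy ρb ρ : EReal) ≤
      liminf (fun n => (regEnergyE ζ (ε n) ρb (ρn n) : EReal)) atTop := by
  refine le_of_forall_gt_imp_ge_of_dense fun c hc => ?_
  have hfr := frequently_lt_of_liminf_lt (by isBoundedDefault) hc
  induction c with
  | bot => exact absurd hc not_lt_bot
  | top => exact le_top
  | coe S =>
    have hS0 : 0 ≤ S := by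
      obtain ⟨n, hn⟩ := hfr.exists
      exact_mod_cast (EReal.coe_ennreal_nonneg _).trans hn.le
    have hS : (S : EReal) = ((ENNReal.ofReal S : ℝ≥0∞) : EReal) := by
      rw [EReal.coe_ennreal_ofReal, max_eq_left hS0]
    rw [hS] at hfr ⊢
    rw [EReal.coe_ennreal_le_coe_ennreal_iff]
    refine intEnergy_le_of_dual hT ρ fun f hf hfc => ?_
    obtain ⟨M, hfM⟩ := hf.bounded_above_of_compact_support hfc
    have hlim := tendsto_integral_convF hM (hfc.uniformContinuous_of_continuous hf) hfM
      hε hε0 hρn hconv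
    refine le_of_tendsto_of_frequently hlim (hfr.mono fun n hn => ?_)
    have := hρn n
    exact integral_convF_le hM hT (hε n) (ρn n) hS0
      (EReal.coe_ennreal_le_coe_ennreal_iff.1 hn.le) hf hfc

/-- Γ-liminf inequality for `E_ε + 𝒱_ε` along narrowly converging
sequences, as `ε → 0`. -/
theorem regEnergy_potential_liminf (d : ℕ) (hd : 1 ≤ d) (ρb : Ed d → ℝ) (hT : AssumptionT ρb)
    (ζ : Ed d → ℝ) (hM : AssumptionM ζ) (V : Ed d → ℝ) (hV : AssumptionV V)
    (ε : ℕ → ℝ) (hε : ∀ n, 0 < ε n) (hε0 : Tendsto ε atTop (𝓝 0))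
    (ρn : ℕ → Measure (Ed d)) (ρ : Measure (Ed d))
    (hρn : ∀ n, IsProbabilityMeasure (ρn n)) (hρ : IsProbabilityMeasure ρ)
    (hconv : NarrowTendsto ρn ρ) :
    (intEnergy ρb ρ : EReal) + ((∫ x, V x ∂ρ : ℝ) : EReal) ≤
      Filter.liminf
        (fun n => (regEnergyE ζ (ε n) ρb (ρn n) : EReal) +
          ((∫ x, convF ζ (ε n) V x ∂(ρn n) : ℝ) : EReal))
        Filter.atTop := by
  obtain ⟨M, hVM⟩ := hV.2.2.1
  have hpot := tendsto_integral_convF hM hV.uniformContinuous hVM hε hε0 hρn hconv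
  have hpotE : Tendsto (fun n => ((∫ x, convF ζ (ε n) V x ∂(ρn n) : ℝ) : EReal)) atTop
      (𝓝 ((∫ x, V x ∂ρ : ℝ) : EReal)) :=
    (continuous_coe_real_ereal.tendsto _).comp hpot
  refine le_trans ?_ EReal.le_liminf_add
  rw [hpotE.liminf_eq]
  exact add_le_add_left (intEnergy_le_liminf hT hM hε hε0 hρn hρ hconv) _

end
end

section
/- Let d ≥ 1, let Ω ⊆ ℝ^d be nonempty, open, and convex, and let (V_k)_{k∈ℕ} satisfy assumptions (C) and (Ck). Let ρ_k be a sequence of Borel probability measures on ℝ^d converging narrowly to ρ. Then liminf_{k→∞} ∫ V_k dρ_k ≥ 𝒱_Ω(ρ) in [0,∞]; equivalently, if liminf_{k→∞} ∫ V_k dρ_k < ∞, then the support of ρ is contained in the closure of Ω. -/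
/-! If `ρ` charges the complement of `closure Ω`, then some point `c` there has all its
neighbourhoods charged by `ρ`. On a small ball around `c` away from `closure Ω`, the infimum of
`W k` tends to `+∞`, while narrow convergence, tested on a tent function `f` supported in that
ball, keeps `∫ f dρk` away from `0`. Since `(inf W k) * f ≤ W k`, the energies tend to `+∞`. -/

open MeasureTheory Filter Topology Metric
open scoped ENNReal RealInnerProductSpace Classical

noncomputable section

/-- Γ-liminf inequality for the confining energies `𝒱_k` against `𝒱_Ω`. -/
theorem confining_liminf (d : ℕ) (hd : 1 ≤ d) (Ω : Set (Ed d)) (hne : Ω.Nonempty)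
    (ho : IsOpen Ω) (hcv : Convex ℝ Ω)
    (W : ℕ → Ed d → ℝ) (hC : ∀ k, AssumptionC (W k)) (hCk : AssumptionCk Ω W)
    (ρk : ℕ → Measure (Ed d)) (ρ : Measure (Ed d))
    (hρk : ∀ k, IsProbabilityMeasure (ρk k)) (hρ : IsProbabilityMeasure ρ)
    (hconv : NarrowTendsto ρk ρ) :
    confE Ω ρ ≤
      Filter.liminf (fun k => ∫⁻ x, ENNReal.ofReal (W k x) ∂(ρk k)) Filter.atTop := by
  by_cases h0 : ρ ((closure Ω)ᶜ) = 0
  · simp [confE, h0]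
  -- A point of the support of `ρ` outside `closure Ω`.
  obtain ⟨c, hc, hpos⟩ := exists_mem_forall_mem_nhdsWithin_pos_measure h0
  have hopen : IsOpen (closure Ω)ᶜ := isClosed_closure.isOpen_compl
  obtain ⟨r, hr, hball⟩ := Metric.nhds_basis_closedBall.mem_iff.mp (hopen.mem_nhds hc)
  have hinf := hCk.2 c r hr (closure_ball_subset_closedBall.trans hball)
  -- A tent function, positive exactly on `ball c r`.
  let f : Ed d → ℝ := fun x => max 0 (1 - dist x c / r)
  have hfc : Continuous f := by fun_prop
  have hf0 : ∀ x, 0 ≤ f x := fun x => le_max_left _ _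
  have hf1 : ∀ x, f x ≤ 1 := fun x =>
    max_le zero_le_one (sub_le_self _ (by positivity))
  have hfb : ∀ x, |f x| ≤ 1 := fun x => by rw [abs_of_nonneg (hf0 x)]; exact hf1 x
  have hfint : ∀ (μ : Measure (Ed d)) [IsProbabilityMeasure μ], Integrable f μ := fun μ _ =>
    Integrable.of_bound hfc.aestronglyMeasurable 1 (Eventually.of_forall hfb)
  have hlim := hconv f hfc ⟨1, hfb⟩
  have ha : 0 < ∫ x, f x ∂ρ := by
    rw [integral_pos_iff_support_of_nonneg hf0 (hfint ρ)]
    refine (hpos _ (mem_nhdsWithin_of_mem_nhds (ball_mem_nhds c hr))).trans_le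
      (measure_mono fun x hx => ?_)
    have : dist x c / r < 1 := (div_lt_one hr).2 hx
    exact (lt_max_of_lt_right (sub_pos.2 this)).ne'
  have hprod : Tendsto (fun k => ENNReal.ofReal
      (sInf ((W k) '' (ball c r)) * ∫ x, f x ∂(ρk k))) atTop (𝓝 ⊤) :=
    ENNReal.tendsto_ofReal_nhds_top.2 (hinf.atTop_mul_pos ha hlim)
  have hle : ∀ k, ENNReal.ofReal (sInf ((W k) '' (ball c r)) * ∫ x, f x ∂(ρk k)) ≤
      ∫⁻ x, ENNReal.ofReal (W k x) ∂(ρk k) := fun k => by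
    have hs0 : 0 ≤ sInf ((W k) '' (ball c r)) :=
      Real.sInf_nonneg (by rintro _ ⟨x, -, rfl⟩; exact (hC k).1 x)
    rw [← integral_const_mul, ofReal_integral_eq_lintegral_ofReal
      ((hfint (ρk k)).const_mul _) (Eventually.of_forall fun x => mul_nonneg hs0 (hf0 x))]
    refine lintegral_mono fun x => ENNReal.ofReal_le_ofReal ?_
    by_cases hx : x ∈ ball c r
    · have hbdd : BddBelow ((W k) '' (ball c r)) :=
        ⟨0, by rintro _ ⟨y, -, rfl⟩; exact (hC k).1 y⟩
      exact (mul_le_of_le_one_right hs0 (hf1 x)).trans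
        (csInf_le hbdd (Set.mem_image_of_mem _ hx))
    · have : 1 ≤ dist x c / r := (one_le_div hr).2 (not_lt.1 hx)
      have hfx : f x = 0 := max_eq_left (by linarith)
      rw [hfx, mul_zero]
      exact (hC k).1 x
  have htop := tendsto_nhds_top_mono' hprod hle
  rw [htop.liminf_eq]
  exact le_top

end
end

section
/- Let d ≥ 1, let Ω ⊆ ℝ^d be nonempty, open, and convex, and let (V_k)_{k∈ℕ} satisfy assumptions (C) and (Ck). Then for every Borel probability measure μ on ℝ^d with finite second moment, lim_{k→∞} ∫ V_k dμ = 𝒱_Ω(μ) in the extended sense: if supp μ ⊆ cl(Ω) then ∫ V_k dμ = 0 for all k, and if supp μ ⊄ cl(Ω) then ∫ V_k dμ → +∞. -/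
/-!
If `μ` is carried by `closure Ω`, the integrals vanish because each `W k`, being continuous, is zero
on all of `closure Ω`. Otherwise some point `x` outside `closure Ω` has only neighbourhoods of
positive measure; on a small ball `B` around `x` one has `∫ W k dμ ≥ (inf_B W k) * μ B`, and the
right-hand side tends to infinity.
-/

open MeasureTheory Filter Topology Metric
open scoped ENNReal RealInnerProductSpace Classical

noncomputable section

/-- pointwise convergence `∫ V_k dμ → 𝒱_Ω(μ)` in the extended sense, for
measures with finite second moment. -/
theorem confining_tendsto (d : ℕ) (hd : 1 ≤ d) (Ω : Set (Ed d)) (hne : Ω.Nonempty)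
    (ho : IsOpen Ω) (hcv : Convex ℝ Ω)
    (W : ℕ → Ed d → ℝ) (hC : ∀ k, AssumptionC (W k)) (hCk : AssumptionCk Ω W)
    (μ : Measure (Ed d)) (hμ : IsProbabilityMeasure μ)
    (hmom : Integrable (fun x => ‖x‖ ^ 2) μ) :
    (μ ((closure Ω)ᶜ) = 0 → ∀ k, (∫⁻ x, ENNReal.ofReal (W k x) ∂μ) = 0) ∧
      (μ ((closure Ω)ᶜ) ≠ 0 →
        Tendsto (fun k => ∫⁻ x, ENNReal.ofReal (W k x) ∂μ) atTop (𝓝 ⊤)) := by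
  obtain ⟨hzero, hinf⟩ := hCk
  refine ⟨fun h k => ?_, fun h => ?_⟩
  · have hcl : Set.EqOn (W k) (fun _ => 0) (closure Ω) :=
      Set.EqOn.closure (fun x hx => hzero k x hx) (hC k).2.2.1.continuous continuous_const
    have hae : ∀ᵐ x ∂μ, x ∈ closure Ω := h
    rw [lintegral_congr_ae (g := fun _ => 0), lintegral_zero]
    filter_upwards [hae] with x hx
    rw [hcl hx, ENNReal.ofReal_zero]
  · obtain ⟨x, hx, hpos⟩ := exists_mem_forall_mem_nhdsWithin_pos_measure h
    have hopen : IsOpen (closure Ω)ᶜ := isClosed_closure.isOpen_compl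
    obtain ⟨r, hr, hsub⟩ := nhds_basis_closedBall.mem_iff.1 (hopen.mem_nhds hx)
    have hμB : μ (ball x r) ≠ 0 :=
      (hpos _ (mem_nhdsWithin_of_mem_nhds (ball_mem_nhds x hr))).ne'
    have hlim := hinf x r hr (closure_ball_subset_closedBall.trans hsub)
    have hlower : Tendsto
        (fun k => ENNReal.ofReal (sInf (W k '' ball x r)) * μ (ball x r)) atTop (𝓝 ⊤) := by
      have hmul := ENNReal.Tendsto.mul_const (b := μ (ball x r))
        (ENNReal.tendsto_ofReal_atTop.comp hlim) (Or.inl ENNReal.top_ne_zero)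
      rwa [ENNReal.top_mul hμB] at hmul
    refine tendsto_nhds_top_mono' hlower fun k => ?_
    calc ENNReal.ofReal (sInf (W k '' ball x r)) * μ (ball x r)
        = ∫⁻ _ in ball x r, ENNReal.ofReal (sInf (W k '' ball x r)) ∂μ :=
          (setLIntegral_const _ _).symm
      _ ≤ ∫⁻ y in ball x r, ENNReal.ofReal (W k y) ∂μ := by
          refine setLIntegral_mono' measurableSet_ball fun y hy => ENNReal.ofReal_le_ofReal ?_
          -- nonnegativity bounds the image below, so that `sInf` is a genuine infimum
          refine csInf_le ⟨0, ?_⟩ (Set.mem_image_of_mem _ hy)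
          rintro _ ⟨z, -, rfl⟩
          exact (hC k).1 z
      _ ≤ ∫⁻ y, ENNReal.ofReal (W k y) ∂μ := setLIntegral_le_lintegral _ _

end
end

section
/- Let d ≥ 1, let Ω ⊆ ℝ^d be nonempty, open, and convex, let ρ̄ satisfy assumption (T), and let V satisfy assumption (V). Define F(μ) = E(μ) + ∫ V dμ + 𝒱_Ω(μ) on Borel probability measures on ℝ^d. If ρ₀ and ρ₁ are both minimizers of F over Borel probability measures on ℝ^d, then ρ₀ = ρ₁. -/
/-!
Uniqueness follows from strict convexity of `Flim` along linear interpolation of measures.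

The normalised Lebesgue measure on a ball contained in `Ω` has finite energy
(`exists_Flim_ne_top`), so two minimizers `ρ₀`, `ρ₁` have finite energy; hence they have densities
`f`, `g` and charge only `closure Ω` (`of_Flim_ne_top`). The midpoint `ν = (ρ₀ + ρ₁) / 2` is a
competitor. The potential and confinement terms are affine along the segment, while the
parallelogram identity for the quadratic internal energy (`parallelogram`) gives
`E ν + D = (E ρ₀ + E ρ₁) / 2` with `D = (1/2) ∫ ((f - g) / 2)² / ρ̄`. Minimality forces `D = 0`,
that is, `f = g` almost everywhere.
-/

open MeasureTheory Filter Topology Metric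
open scoped ENNReal RealInnerProductSpace Classical

noncomputable section

lemma intEnergy_withDensity {d : ℕ} (ρb : Ed d → ℝ) {f : Ed d → ℝ≥0∞} (hf : Measurable f) :
    intEnergy ρb ((volume : Measure (Ed d)).withDensity f) =
      2⁻¹ * ∫⁻ x, (f x) ^ 2 / ENNReal.ofReal (ρb x) := by
  rw [intEnergy, if_pos (withDensity_absolutelyContinuous _ _)]
  congr 1
  apply lintegral_congr_ae
  filter_upwards [Measure.rnDeriv_withDensity (volume : Measure (Ed d)) hf] with x hx
  rw [hx]

lemma Flim_eq_coe {d : ℕ} {ρb V : Ed d → ℝ} {Ω : Set (Ed d)} {μ : Measure (Ed d)}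
    (hE : intEnergy ρb μ ≠ ⊤) (hc : μ (closure Ω)ᶜ = 0) :
    Flim ρb V Ω μ = (((intEnergy ρb μ).toReal + ∫ x, V x ∂μ : ℝ) : EReal) := by
  rw [Flim, confE, if_pos hc, EReal.coe_add, ← EReal.coe_toReal (x := (intEnergy ρb μ : EReal)) (by simpa using hE) (by simp)]
  simp

lemma of_Flim_ne_top {d : ℕ} {ρb V : Ed d → ℝ} {Ω : Set (Ed d)} {μ : Measure (Ed d)}
    (h : Flim ρb V Ω μ ≠ ⊤) :
    intEnergy ρb μ ≠ ⊤ ∧ μ (closure Ω)ᶜ = 0 ∧ μ ≪ (volume : Measure (Ed d)) := by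
  have hE : intEnergy ρb μ ≠ ⊤ := by
    intro hE
    apply h
    have hc : ((confE Ω μ : ℝ≥0∞) : EReal) ≠ ⊥ := EReal.coe_ennreal_ne_bot _
    rw [Flim, hE, EReal.coe_ennreal_top, EReal.top_add_coe, EReal.top_add_of_ne_bot hc]
  refine ⟨hE, ?_, ?_⟩
  · by_contra hc
    apply h
    rw [Flim, confE, if_neg hc, EReal.coe_ennreal_top]
    apply EReal.add_top_of_ne_bot
    lift intEnergy ρb μ to NNReal using hE with e
    exact EReal.coe_ne_bot ((e : ℝ) + _)
  · by_contra hac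
    exact hE (by rw [intEnergy, if_neg hac])

/-- The normalised Lebesgue measure on a ball inside `Ω` has finite energy. -/
lemma exists_Flim_ne_top {d : ℕ} {ρb V : Ed d → ℝ} {Ω : Set (Ed d)} (hne : Ω.Nonempty)
    (ho : IsOpen Ω) (hT : AssumptionT ρb) :
    ∃ ν : Measure (Ed d), IsProbabilityMeasure ν ∧ Flim ρb V Ω ν ≠ ⊤ := by
  obtain ⟨-, C, hC, hρ⟩ := hT
  obtain ⟨x₀, hx₀⟩ := hne
  obtain ⟨r, hr, hball⟩ := Metric.isOpen_iff.1 ho x₀ hx₀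
  set B := ball x₀ r
  have hB0 : volume B ≠ 0 := (measure_ball_pos volume x₀ hr).ne'
  have hBt : volume B ≠ ⊤ := measure_ball_lt_top.ne
  set c : ℝ≥0∞ := (volume B)⁻¹
  have hct : c ≠ ⊤ := ENNReal.inv_ne_top.2 hB0
  have hBm : MeasurableSet B := measurableSet_ball
  set f : Ed d → ℝ≥0∞ := B.indicator fun _ => c
  have hf : Measurable f := measurable_const.indicator hBm
  refine ⟨volume.withDensity f, ⟨?_⟩, ?_⟩
  · rw [withDensity_apply _ MeasurableSet.univ, Measure.restrict_univ,
      lintegral_indicator_const hBm, ENNReal.inv_mul_cancel hB0 hBt]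
  · rw [Flim_eq_coe]
    · exact EReal.coe_ne_top _
    · rw [intEnergy_withDensity ρb hf]
      refine ENNReal.mul_ne_top (by simp) (ne_top_of_le_ne_top (b := c ^ 2 /
        ENNReal.ofReal C⁻¹ * volume B) ?_ ?_)
      · refine ENNReal.mul_ne_top (ENNReal.div_ne_top (ENNReal.pow_ne_top hct) ?_) hBt
        simpa using hC
      · rw [← lintegral_indicator_const hBm]
        apply lintegral_mono
        intro x
        by_cases hx : x ∈ B
        · simp only [f, Set.indicator_of_mem hx]
          gcongr
          exact (hρ x).1
        · simp [f, hx]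
    · rw [withDensity_apply _ isClosed_closure.measurableSet.compl]
      rw [setLIntegral_eq_zero_iff isClosed_closure.measurableSet.compl hf]
      refine Eventually.of_forall fun x hx => ?_
      have : x ∉ B := fun h => hx (subset_closure (hball h))
      simp [f, this]

/-- The parallelogram identity for `s ↦ s² / r`, with subtraction taken in `ℝ`. -/
lemma parallelogram {a b : ℝ≥0∞} (ha : a ≠ ⊤) (hb : b ≠ ⊤) {r : ℝ} (hr : 0 < r) :
    (2⁻¹ * (a + b)) ^ 2 / ENNReal.ofReal r
      + ENNReal.ofReal (((a.toReal - b.toReal) / 2) ^ 2 / r) =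
    2⁻¹ * (a ^ 2 / ENNReal.ofReal r + b ^ 2 / ENNReal.ofReal r) := by
  have h2 : (2⁻¹ : ℝ≥0∞) = ENNReal.ofReal (2⁻¹ : ℝ) := by
    rw [ENNReal.ofReal_inv_of_pos two_pos]; simp
  rw [← ENNReal.ofReal_toReal ha, ← ENNReal.ofReal_toReal hb]
  have ha0 : 0 ≤ a.toReal := ENNReal.toReal_nonneg
  have hb0 : 0 ≤ b.toReal := ENNReal.toReal_nonneg
  generalize a.toReal = s at *
  generalize b.toReal = t at *
  rw [ENNReal.toReal_ofReal ha0, ENNReal.toReal_ofReal hb0, h2]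
  rw [← ENNReal.ofReal_add ha0 hb0, ← ENNReal.ofReal_mul (by norm_num),
    ← ENNReal.ofReal_pow (by positivity), ← ENNReal.ofReal_pow (by positivity),
    ← ENNReal.ofReal_pow (by positivity), ← ENNReal.ofReal_div_of_pos hr,
    ← ENNReal.ofReal_div_of_pos hr, ← ENNReal.ofReal_div_of_pos hr,
    ← ENNReal.ofReal_add (by positivity) (by positivity),
    ← ENNReal.ofReal_add (by positivity) (by positivity),
    ← ENNReal.ofReal_mul (by norm_num)]
  congr 1
  ring

/-- uniqueness of minimizers of `F = E + 𝒱 + 𝒱_Ω`. -/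
theorem F_minimizer_unique (d : ℕ) (hd : 1 ≤ d) (Ω : Set (Ed d)) (hne : Ω.Nonempty)
    (ho : IsOpen Ω) (hcv : Convex ℝ Ω)
    (ρb : Ed d → ℝ) (hT : AssumptionT ρb) (V : Ed d → ℝ) (hV : AssumptionV V)
    (ρ₀ ρ₁ : Measure (Ed d)) (h0 : IsProbabilityMeasure ρ₀) (h1 : IsProbabilityMeasure ρ₁)
    (hmin0 : ∀ ν : Measure (Ed d), IsProbabilityMeasure ν → Flim ρb V Ω ρ₀ ≤ Flim ρb V Ω ν)
    (hmin1 : ∀ ν : Measure (Ed d), IsProbabilityMeasure ν → Flim ρb V Ω ρ₁ ≤ Flim ρb V Ω ν) :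
    ρ₀ = ρ₁ := by
  obtain ⟨ν₀, hν₀, hν₀fin⟩ := exists_Flim_ne_top (V := V) hne ho hT
  obtain ⟨hE0, hc0, hac0⟩ := of_Flim_ne_top (ne_top_of_le_ne_top hν₀fin (hmin0 ν₀ hν₀))
  obtain ⟨hE1, hc1, hac1⟩ := of_Flim_ne_top (ne_top_of_le_ne_top hν₀fin (hmin1 ν₀ hν₀))
  obtain ⟨hρc, C, hC, hρ⟩ := hT
  obtain ⟨hVc, -, ⟨M, hM⟩, -⟩ := hV
  have hρpos : ∀ x, 0 < ρb x := fun x => (inv_pos.2 hC).trans_le (hρ x).1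
  have hρm : Measurable ρb := hρc.continuous.measurable
  set f := ρ₀.rnDeriv volume
  set g := ρ₁.rnDeriv volume
  have hf : Measurable f := Measure.measurable_rnDeriv _ _
  have hg : Measurable g := Measure.measurable_rnDeriv _ _
  have hρ0 : volume.withDensity f = ρ₀ := Measure.withDensity_rnDeriv_eq _ _ hac0
  have hρ1 : volume.withDensity g = ρ₁ := Measure.withDensity_rnDeriv_eq _ _ hac1
  have hft : ∀ᵐ x, f x ≠ ⊤ := Measure.rnDeriv_ne_top _ _
  have hgt : ∀ᵐ x, g x ≠ ⊤ := Measure.rnDeriv_ne_top _ _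
  have hhalf : (2⁻¹ : ℝ≥0∞) ≠ ⊤ := by simp
  set ν : Measure (Ed d) := (2⁻¹ : ℝ≥0∞) • (ρ₀ + ρ₁) with hν
  have hνd : ν = volume.withDensity fun x => 2⁻¹ * (f x + g x) := by
    rw [hν, ← hρ0, ← hρ1, ← withDensity_add_left hf, ← withDensity_smul _ (hf.add hg)]
    rfl
  have hνp : IsProbabilityMeasure ν := by
    constructor
    simp only [hν, Measure.smul_apply, Measure.add_apply, measure_univ, smul_eq_mul]
    rw [one_add_one_eq_two, ENNReal.inv_mul_cancel (by simp) (by simp)]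
  have hcν : ν (closure Ω)ᶜ = 0 := by simp [hν, hc0, hc1]
  -- The energy defect of the midpoint measure.
  set D : ℝ≥0∞ := 2⁻¹ * ∫⁻ x, ENNReal.ofReal ((((f x).toReal - (g x).toReal) / 2) ^ 2 / ρb x)
    with hD
  have hDm : Measurable fun x =>
      ENNReal.ofReal ((((f x).toReal - (g x).toReal) / 2) ^ 2 / ρb x) := by fun_prop
  have hsum : intEnergy ρb ν + D = 2⁻¹ * (intEnergy ρb ρ₀ + intEnergy ρb ρ₁) := by
    rw [hνd, intEnergy_withDensity ρb (by fun_prop), hD, ← mul_add,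
      ← lintegral_add_right _ hDm, intEnergy, if_pos hac0, intEnergy, if_pos hac1, ← mul_add,
      ← lintegral_add_left (by fun_prop)]
    congr 1
    rw [← lintegral_const_mul _ (by fun_prop)]
    apply lintegral_congr_ae
    filter_upwards [hft, hgt] with x hfx hgx
    exact parallelogram hfx hgx (hρpos x)
  have hsumt : intEnergy ρb ν + D ≠ ⊤ := by
    rw [hsum]
    exact ENNReal.mul_ne_top hhalf (ENNReal.add_ne_top.2 ⟨hE0, hE1⟩)
  obtain ⟨hEν, hDt⟩ := ENNReal.add_ne_top.1 hsumt
  have hsumR : (intEnergy ρb ν).toReal + D.toReal =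
      2⁻¹ * ((intEnergy ρb ρ₀).toReal + (intEnergy ρb ρ₁).toReal) := by
    rw [← ENNReal.toReal_add hEν hDt, hsum, ENNReal.toReal_mul, ENNReal.toReal_add hE0 hE1]
    simp
  have hVi : ∀ μ : Measure (Ed d), IsProbabilityMeasure μ → Integrable V μ := fun μ _ =>
    Integrable.of_bound hVc.continuous.aestronglyMeasurable M
      (Eventually.of_forall fun x => hM x)
  have hVν : ∫ x, V x ∂ν = 2⁻¹ * (∫ x, V x ∂ρ₀ + ∫ x, V x ∂ρ₁) := by
    rw [hν, integral_smul_measure, integral_add_measure (hVi _ h0) (hVi _ h1)]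
    simp
  have hm0 := hmin0 ν hνp
  have hm1 := hmin1 ν hνp
  rw [Flim_eq_coe hE0 hc0, Flim_eq_coe hEν hcν, EReal.coe_le_coe_iff] at hm0
  rw [Flim_eq_coe hE1 hc1, Flim_eq_coe hEν hcν, EReal.coe_le_coe_iff] at hm1
  have hD0 : D = 0 := by
    have hle : D.toReal ≤ 0 := by linarith
    have := le_antisymm hle ENNReal.toReal_nonneg
    exact ((ENNReal.toReal_eq_zero_iff _).1 this).resolve_right hDt
  have hint := (mul_eq_zero.1 hD0).resolve_left (by simp)
  rw [lintegral_eq_zero_iff hDm] at hint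
  rw [← hρ0, ← hρ1]
  apply withDensity_congr_ae
  filter_upwards [hint, hft, hgt] with x hx hfx hgx
  have hx' : (((f x).toReal - (g x).toReal) / 2) ^ 2 / ρb x ≤ 0 := ENNReal.ofReal_eq_zero.1 hx
  rw [div_le_iff₀ (hρpos x), zero_mul] at hx'
  have hsq : ((f x).toReal - (g x).toReal) / 2 = 0 :=
    pow_eq_zero_iff two_ne_zero |>.1 (le_antisymm hx' (sq_nonneg _))
  rw [← ENNReal.toReal_eq_toReal_iff' hfx hgx]
  linarith

end
end
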